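/- Let μ be a Borel probability measure on the circle ℝ/ℤ and let φ : ℕ → [0,∞) be a non-increasing function with Σ_{n≥2} φ(n)/(n log n) < ∞. If the Fourier coefficients of μ satisfy |μ̂(k)| ≤ φ(|k|) for all integers k ≠ 0, then for every integer q ≥ 2, μ-almost every x ∈ [0,1) is normal to base q. -/

import Mathlib

open Filter MeasureTheory Topology
open scoped Classical

/-- The `(n+1)`-st digit (i.e. `ε_{n+1}`, `0`-indexed by `n`) of the base-`q` expansion of `x`,
chosen as the greedy expansion (never eventually equal to `q - 1`). -/
noncomputable def qdigit (q : ℕ) (x : ℝ) (n : ℕ) : ℕ :=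
  (⌊x * (q : ℝ) ^ (n + 1)⌋).toNat % q

/-- `x` is normal to base `q`: every word `d` of length `m ≥ 1` over `{0, …, q-1}` occurs in the
base-`q` digit sequence of `x` with frequency `q^{-m}`. -/
def IsNormal (q : ℕ) (x : ℝ) : Prop :=
  ∀ m : ℕ, 0 < m → ∀ d : Fin m → ℕ, (∀ i, d i < q) →
    Tendsto
      (fun N : ℕ =>
        (((Finset.range N).filter fun n =>
          ∀ i : Fin m, qdigit q x (n + (i : ℕ)) = d i).card : ℝ) / N)
      atTop (𝓝 (((q : ℝ) ^ m)⁻¹))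


/-- Deterministic Davenport–Erdős–LeVeque lemma. -/
lemma del_pointwise (u : ℕ → ℂ) (hu : ∀ n, ‖u n‖ ≤ 1)
    (hs : Summable fun n : ℕ => ‖∑ i ∈ Finset.range (n + 1), u i‖ ^ 2 / ((n : ℝ) + 1) ^ 3) :
    Tendsto (fun N : ℕ => ‖∑ i ∈ Finset.range N, u i‖ / N) atTop (𝓝 0) := by
  set S : ℕ → ℂ := fun N => ∑ i ∈ Finset.range N, u i with hS
  have hstep : ∀ N j, ‖S N‖ - j ≤ ‖S (N + j)‖ := by
    intro N j
    have h1 : S (N + j) = S N + ∑ i ∈ Finset.range j, u (N + i) := by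
      simp only [hS, Finset.sum_range_add]
    have h2 : ‖∑ i ∈ Finset.range j, u (N + i)‖ ≤ j := by
      calc _ ≤ ∑ i ∈ Finset.range j, ‖u (N + i)‖ := norm_sum_le _ _
        _ ≤ ∑ i ∈ Finset.range j, (1 : ℝ) := Finset.sum_le_sum fun i _ => hu _
        _ = j := by simp
    have h3 : ‖S N‖ ≤ ‖S (N + j)‖ + ‖∑ i ∈ Finset.range j, u (N + i)‖ := by
      have : S N = S (N + j) - ∑ i ∈ Finset.range j, u (N + i) := by rw [h1]; ring
      rw [this]; exact norm_sub_le _ _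
    linarith
  have htail := tendsto_sum_nat_add (fun n : ℕ => ‖S (n + 1)‖ ^ 2 / ((n : ℝ) + 1) ^ 3)
  rw [Metric.tendsto_atTop]
  intro ε' hε'
  set ε := min ε' 1 with hε
  have hε0 : 0 < ε := lt_min hε' one_pos
  have hε1 : ε ≤ 1 := min_le_right _ _
  obtain ⟨M, hM⟩ := Filter.eventually_atTop.1 (htail.eventually_lt_const (show (0:ℝ) < ε ^ 3 / 64 by positivity))
  refine ⟨M + 1, fun N hN => ?_⟩
  rw [Real.dist_eq, sub_zero, abs_of_nonneg (by positivity)]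
  refine lt_of_lt_of_le ?_ (min_le_left ε' 1)
  change ‖S N‖ / N < ε
  obtain ⟨K, rfl⟩ : ∃ K, N = K + 1 := ⟨N - 1, by omega⟩
  by_contra! hcon
  have hNpos : (0 : ℝ) < ((K + 1 : ℕ) : ℝ) := by positivity
  rw [le_div_iff₀ hNpos] at hcon
  have hK := hM K (by omega)
  set x : ℝ := ((K + 1 : ℕ) : ℝ) with hx
  have hx' : x = K + 1 := by rw [hx]; push_cast; ring
  set L : ℕ := ⌊ε * x / 2⌋₊ + 1 with hL
  have hsum : Summable fun k : ℕ => ‖S (k + K + 1)‖ ^ 2 / (((k + K : ℕ) : ℝ) + 1) ^ 3 :=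
    (summable_nat_add_iff K).2 hs
  have hle := hsum.sum_le_tsum (Finset.range L) (fun i _ => by positivity)
  have hlow : ∀ j ∈ Finset.range L, ε ^ 2 / (32 * x) ≤ ‖S (j + K + 1)‖ ^ 2 / (((j + K : ℕ) : ℝ) + 1) ^ 3 := by
    intro j hj
    have hj1 : j ≤ ⌊ε * x / 2⌋₊ := by
      have := Finset.mem_range.1 hj; omega
    have hj2 : (j : ℝ) ≤ ε * x / 2 := by
      exact (Nat.le_floor_iff (by positivity)).1 hj1
    have h1 := hstep (K + 1) j
    have h2 : ε * x / 2 ≤ ‖S (j + K + 1)‖ := by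
      rw [show j + K + 1 = K + 1 + j by ring]; linarith
    have h3 : ((j + K : ℕ) : ℝ) + 1 ≤ 2 * x := by
      push_cast
      nlinarith
    calc ε ^ 2 / (32 * x) = (ε * x / 2) ^ 2 / (2 * x) ^ 3 := by field_simp; norm_num
      _ ≤ _ := by gcongr
  have h4 := Finset.card_nsmul_le_sum _ _ _ hlow
  rw [Finset.card_range, nsmul_eq_mul] at h4
  have h5 : ε * x / 2 ≤ L := by
    rw [hL]; push_cast; exact (Nat.lt_floor_add_one _).le
  have h6 : ε ^ 3 / 64 ≤ L * (ε ^ 2 / (32 * x)) := by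
    calc ε ^ 3 / 64 = (ε * x / 2) * (ε ^ 2 / (32 * x)) := by field_simp; norm_num
      _ ≤ _ := by gcongr
  have := h6.trans (h4.trans hle)
  exact absurd hK (not_lt.2 this)

/-- Hardy-type summability. -/
lemma summable_avg (a : ℕ → ℝ) (ha : ∀ n, 0 ≤ a n) (hs : Summable fun n : ℕ => a n / ((n : ℝ) + 1)) :
    Summable fun n : ℕ => (∑ m ∈ Finset.range (n + 1), a m) / ((n : ℝ) + 1) ^ 2 := by
  have key : ∀ K : ℕ, ∑ n ∈ Finset.range K, (∑ m ∈ Finset.range (n + 1), a m) / ((n : ℝ) + 1) ^ 2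
      + 2 * (∑ m ∈ Finset.range K, a m) / ((K : ℝ) + 1) ≤ 2 * ∑ n ∈ Finset.range K, a n / ((n : ℝ) + 1) := by
    intro K
    induction K with
    | zero => simp
    | succ K ih =>
      rw [Finset.sum_range_succ, Finset.sum_range_succ (fun n : ℕ => a n / ((n : ℝ) + 1))]
      have hb : 0 ≤ ∑ m ∈ Finset.range (K + 1), a m := Finset.sum_nonneg fun _ _ => ha _
      have hc : ∑ m ∈ Finset.range (K + 1), a m = ∑ m ∈ Finset.range K, a m + a K := Finset.sum_range_succ _ _
      set B := ∑ m ∈ Finset.range (K + 1), a m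
      have h : B / ((K : ℝ) + 1) ^ 2 + 2 * B / (((K + 1 : ℕ) : ℝ) + 1) ≤ 2 * B / ((K : ℝ) + 1) := by
        have : 2 * B / ((K : ℝ) + 1) - (B / ((K : ℝ) + 1) ^ 2 + 2 * B / (((K + 1 : ℕ) : ℝ) + 1))
            = B * K / (((K : ℝ) + 1) ^ 2 * (K + 2)) := by
          push_cast; rw [show (K : ℝ) + 1 + 1 = K + 2 by ring]; field_simp; ring
        have : 0 ≤ B * K / (((K : ℝ) + 1) ^ 2 * (K + 2)) := by positivity
        linarith
      have e : 2 * B / ((K : ℝ) + 1) = 2 * (∑ m ∈ Finset.range K, a m) / ((K : ℝ) + 1) + 2 * (a K / ((K : ℝ) + 1)) := by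
        rw [hc]; ring
      linarith
  refine summable_of_sum_range_le (c := 2 * ∑' n : ℕ, a n / ((n : ℝ) + 1)) (fun n => ?_) (fun K => ?_)
  · have := Finset.sum_nonneg fun m (_ : m ∈ Finset.range (n+1)) => ha m
    positivity
  · have h1 := key K
    have h2 : 0 ≤ 2 * (∑ m ∈ Finset.range K, a m) / ((K : ℝ) + 1) := by
      have := Finset.sum_nonneg fun m (_ : m ∈ Finset.range K) => ha m
      positivity
    have h3 := hs.sum_le_tsum (Finset.range K) (fun i _ => div_nonneg (ha i) (by positivity))
    linarith

lemma summable_phi (φ : ℕ → ℝ) (hφ0 : ∀ n, 0 ≤ φ n) (hφmono : Antitone φ)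
    (hφsum : Summable fun n : ℕ => φ (n + 2) / (((n : ℝ) + 2) * Real.log ((n : ℝ) + 2)))
    (q : ℕ) (hq : 2 ≤ q) : Summable fun n : ℕ => φ (q ^ (n - 1)) / ((n : ℝ) + 1) := by
  set f : ℕ → ℝ := fun n => φ (max n 2) / (((max n 2 : ℕ) : ℝ) * Real.log ((max n 2 : ℕ) : ℝ)) with hf
  have hlogpos : ∀ n : ℕ, 0 < Real.log ((max n 2 : ℕ) : ℝ) := fun n =>
    Real.log_pos (by exact_mod_cast (show 1 < max n 2 by omega))
  have hpos : ∀ n : ℕ, 0 < ((max n 2 : ℕ) : ℝ) := fun n => by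
    exact_mod_cast (show 0 < max n 2 by omega)
  have h0 : ∀ n, 0 ≤ f n := fun n => div_nonneg (hφ0 _) (mul_pos (hpos n) (hlogpos n)).le
  have hm : ∀ ⦃m n⦄, 0 < m → m ≤ n → f n ≤ f m := by
    intro m n _ hmn
    have hmax : max m 2 ≤ max n 2 := max_le_max_right 2 hmn
    have hmax' : ((max m 2 : ℕ) : ℝ) ≤ ((max n 2 : ℕ) : ℝ) := by exact_mod_cast hmax
    apply div_le_div₀ (hφ0 _) (hφmono hmax) (mul_pos (hpos m) (hlogpos m))
    exact mul_le_mul hmax' (Real.log_le_log (hpos m) hmax') (hlogpos m).le (hpos n).le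
  have hfs : Summable f := by
    rw [← summable_nat_add_iff 2]
    have e : (fun n => f (n + 2)) =
        fun n : ℕ => φ (n + 2) / (((n : ℝ) + 2) * Real.log ((n : ℝ) + 2)) := by
      funext n
      simp [hf]
    rw [e]
    exact hφsum
  have hc := (summable_condensed_iff_of_nonneg h0 hm).2 hfs
  rw [← summable_nat_add_iff 2]
  rw [← summable_nat_add_iff 1] at hc
  refine Summable.of_nonneg_of_le (fun n => div_nonneg (hφ0 _) (by positivity)) (fun n => ?_) (hc.mul_left (Real.log 2))
  have hmx : max (2 ^ (n + 1)) 2 = 2 ^ (n + 1) := by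
    apply max_eq_left; rw [pow_succ]; have := Nat.one_le_two_pow (n := n); omega
  have hl2 : 0 < Real.log 2 := Real.log_pos (by norm_num)
  have : Real.log 2 * ((2 : ℝ) ^ (n + 1) * f (2 ^ (n + 1))) = φ (2 ^ (n + 1)) / ((n : ℝ) + 1) := by
    simp only [hf, hmx]
    push_cast
    rw [Real.log_pow]
    push_cast
    field_simp
  rw [this]
  apply div_le_div₀ (hφ0 _) _ (by positivity) (by push_cast; linarith)
  apply hφmono
  exact Nat.pow_le_pow_left hq _

lemma l2_bound (μ : Measure UnitAddCircle) [IsProbabilityMeasure μ] (k : ℕ → ℤ) (N : ℕ) :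
    ∫ z, ‖∑ i ∈ Finset.range N, fourier (k i) z‖ ^ 2 ∂μ ≤
      ∑ i ∈ Finset.range N, ∑ j ∈ Finset.range N, ‖∫ z, fourier (k i - k j) z ∂μ‖ := by
  have hfint : ∀ m : ℤ, Integrable (fun z : UnitAddCircle => (fourier m z : ℂ)) μ := fun m =>
    (fourier m).continuous.integrable_of_hasCompactSupport (HasCompactSupport.of_compactSpace _)
  have hpt : ∀ z : UnitAddCircle, ((‖∑ i ∈ Finset.range N, (fourier (k i) z : ℂ)‖ ^ 2 : ℝ) : ℂ) =
      ∑ i ∈ Finset.range N, ∑ j ∈ Finset.range N, (fourier (k i - k j) z : ℂ) := by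
    intro z
    push_cast
    rw [← Complex.mul_conj', map_sum, Finset.sum_mul_sum]
    refine Finset.sum_congr rfl fun i _ => Finset.sum_congr rfl fun j _ => ?_
    rw [← fourier_neg, ← fourier_add, sub_eq_add_neg]
  have hC : ((∫ z, ‖∑ i ∈ Finset.range N, (fourier (k i) z : ℂ)‖ ^ 2 ∂μ : ℝ) : ℂ) =
      ∑ i ∈ Finset.range N, ∑ j ∈ Finset.range N, ∫ z, (fourier (k i - k j) z : ℂ) ∂μ := by
    rw [← integral_complex_ofReal]
    simp_rw [hpt]
    rw [integral_finsetSum _ fun i _ => integrable_finsetSum _ fun j _ => hfint _]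
    refine Finset.sum_congr rfl fun i _ => ?_
    rw [integral_finsetSum _ fun j _ => hfint _]
  calc _ ≤ ‖((∫ z, ‖∑ i ∈ Finset.range N, (fourier (k i) z : ℂ)‖ ^ 2 ∂μ : ℝ) : ℂ)‖ := by
        rw [Complex.norm_real]; exact le_abs_self _
    _ ≤ _ := by
        rw [hC]
        exact (norm_sum_le _ _).trans (Finset.sum_le_sum fun i _ => norm_sum_le _ _)

lemma coeff_bound (μ : Measure UnitAddCircle) [IsProbabilityMeasure μ]
    (φ : ℕ → ℝ) (hφ0 : ∀ n, 0 ≤ φ n) (hφmono : Antitone φ)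
    (hdecay : ∀ k : ℤ, k ≠ 0 → ‖∫ z, fourier (-k) z ∂μ‖ ≤ φ k.natAbs)
    (q : ℕ) (hq : 2 ≤ q) (h : ℤ) (hh : h ≠ 0) (i j : ℕ) :
    ‖∫ z, fourier (h * (q : ℤ) ^ i - h * (q : ℤ) ^ j) z ∂μ‖ ≤
      (if i = j then 1 else 0) + (φ (q ^ (i - 1)) + φ (q ^ (j - 1))) := by
  by_cases hij : i = j
  · subst hij
    have := hφ0 (q ^ (i - 1))
    simp
    linarith
  · have key : ∀ i j : ℕ, i < j → q ^ (j - 1) ≤ (h * (q : ℤ) ^ i - h * (q : ℤ) ^ j).natAbs := by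
      intro i j hlt
      have e : h * (q : ℤ) ^ i - h * (q : ℤ) ^ j = -(h * ((q ^ j - q ^ i : ℕ) : ℤ)) := by
        rw [Nat.cast_sub (Nat.pow_le_pow_right (by omega) hlt.le)]
        push_cast; ring
      rw [e, Int.natAbs_neg, Int.natAbs_mul, Int.natAbs_natCast]
      have h1 : 1 ≤ h.natAbs := Int.natAbs_pos.2 hh
      have h2 : q ^ (j - 1) ≤ q ^ j - q ^ i := by
        have h3 : q ^ i ≤ q ^ (j - 1) := Nat.pow_le_pow_right (by omega) (by omega)
        have h4 : q ^ j = q ^ (j - 1) * q := by rw [← pow_succ]; congr 1; omega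
        have h5 : q ^ (j - 1) * 2 ≤ q ^ (j - 1) * q := Nat.mul_le_mul_left _ hq
        omega
      nlinarith
    have hne : h * (q : ℤ) ^ i - h * (q : ℤ) ^ j ≠ 0 ∧
        φ (h * (q : ℤ) ^ i - h * (q : ℤ) ^ j).natAbs ≤ φ (q ^ (i - 1)) + φ (q ^ (j - 1)) := by
      have hp : ∀ n : ℕ, 0 < q ^ n := fun n => Nat.pow_pos (by omega)
      rcases lt_or_gt_of_ne hij with hlt | hlt
      · have h1 := key i j hlt
        have h2 := hp (j - 1)
        refine ⟨Int.natAbs_pos.1 (by omega), ?_⟩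
        have := hφmono h1
        have := hφ0 (q ^ (i - 1))
        linarith
      · have h1 := key j i hlt
        have h2 := hp (i - 1)
        rw [← Int.natAbs_neg, neg_sub] at h1
        refine ⟨Int.natAbs_pos.1 (by omega), ?_⟩
        have := hφmono h1
        have := hφ0 (q ^ (j - 1))
        linarith
    have := hdecay (-(h * (q : ℤ) ^ i - h * (q : ℤ) ^ j)) (neg_ne_zero.2 hne.1)
    rw [neg_neg, Int.natAbs_neg] at this
    rw [if_neg hij]
    linarith [hne.2]

lemma ae_weyl (μ : Measure UnitAddCircle) [IsProbabilityMeasure μ]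
    (φ : ℕ → ℝ) (hφ0 : ∀ n, 0 ≤ φ n) (hφmono : Antitone φ)
    (hφsum : Summable fun n : ℕ => φ (n + 2) / (((n : ℝ) + 2) * Real.log ((n : ℝ) + 2)))
    (hdecay : ∀ k : ℤ, k ≠ 0 → ‖∫ z, fourier (-k) z ∂μ‖ ≤ φ k.natAbs)
    (q : ℕ) (hq : 2 ≤ q) (h : ℤ) (hh : h ≠ 0) :
    ∀ᵐ z ∂μ, Tendsto (fun N : ℕ =>
      ‖∑ i ∈ Finset.range N, (fourier (h * (q : ℤ) ^ i) z : ℂ)‖ / N) atTop (𝓝 0) := by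
  set a : ℕ → ℝ := fun n => φ (q ^ (n - 1)) with ha
  have ha0 : ∀ n, 0 ≤ a n := fun n => hφ0 _
  have hsa := summable_avg a ha0 (summable_phi φ hφ0 hφmono hφsum q hq)
  set F : ℕ → UnitAddCircle → ℝ := fun n z =>
    ‖∑ i ∈ Finset.range (n + 1), (fourier (h * (q : ℤ) ^ i) z : ℂ)‖ ^ 2 / ((n : ℝ) + 1) ^ 3 with hF
  have hFc : ∀ n, Continuous (F n) := by
    intro n
    simp only [hF]
    fun_prop
  have hF0 : ∀ n z, 0 ≤ F n z := fun n z => by simp only [hF]; positivity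
  have hFint : ∀ n, Integrable (F n) μ := fun n =>
    (hFc n).integrable_of_hasCompactSupport (HasCompactSupport.of_compactSpace _)
  set b : ℕ → ℝ := fun n => 1 / ((n : ℝ) + 1) ^ 2 +
    2 * ((∑ m ∈ Finset.range (n + 1), a m) / ((n : ℝ) + 1) ^ 2) with hb
  have hFb : ∀ n, ∫ z, F n z ∂μ ≤ b n := by
    intro n
    simp only [hF]
    rw [integral_div]
    have h1 := (l2_bound μ (fun i => h * (q : ℤ) ^ i) (n + 1)).trans
      (Finset.sum_le_sum fun i _ => Finset.sum_le_sum fun j _ =>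
        coeff_bound μ φ hφ0 hφmono hdecay q hq h hh i j)
    have h2 : ∑ i ∈ Finset.range (n + 1), ∑ j ∈ Finset.range (n + 1),
        ((if i = j then (1 : ℝ) else 0) + (φ (q ^ (i - 1)) + φ (q ^ (j - 1)))) =
        ((n : ℝ) + 1) + 2 * ((n : ℝ) + 1) * ∑ m ∈ Finset.range (n + 1), a m := by
      simp only [Finset.sum_add_distrib, Finset.sum_ite_eq, Finset.sum_const, Finset.card_range,
        nsmul_eq_mul, ← Finset.mul_sum]
      have : ∑ i ∈ Finset.range (n + 1), (if i ∈ Finset.range (n + 1) then (1 : ℝ) else 0) = n + 1 := by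
        rw [Finset.sum_congr rfl fun i hi => if_pos hi]; simp
      rw [this]
      simp only [ha]
      push_cast
      ring
    rw [h2] at h1
    rw [div_le_iff₀ (by positivity)]
    refine h1.trans (le_of_eq ?_)
    simp only [hb]
    field_simp
  have hbs : Summable b := by
    refine Summable.add ?_ (hsa.mul_left 2)
    have := (summable_nat_add_iff 1).2 (Real.summable_one_div_nat_pow.2 (show 1 < 2 by norm_num))
    simpa using this
  have hlin : ∫⁻ z, ∑' n, ENNReal.ofReal (F n z) ∂μ ≠ ⊤ := by
    rw [lintegral_tsum fun n => (hFc n).measurable.ennreal_ofReal.aemeasurable]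
    refine ne_top_of_le_ne_top hbs.tsum_ofReal_ne_top (ENNReal.tsum_le_tsum fun n => ?_)
    rw [← ofReal_integral_eq_lintegral_ofReal (hFint n) (ae_of_all _ (hF0 n))]
    exact ENNReal.ofReal_le_ofReal (hFb n)
  have hmeas : Measurable fun z => ∑' n, ENNReal.ofReal (F n z) :=
    Measurable.tsum fun n => (hFc n).measurable.ennreal_ofReal
  filter_upwards [ae_lt_top hmeas hlin] with z hz
  apply del_pointwise
  · intro n
    rw [fourier_apply, Circle.norm_coe]
  · have := ENNReal.summable_toReal hz.ne
    simpa only [ENNReal.toReal_ofReal (hF0 _ z)] using this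

lemma integral_fourier_volume (h : ℤ) (hh : h ≠ 0) :
    ∫ z : UnitAddCircle, (fourier h z : ℂ) = 0 := by
  have h1 := congrFun (fourierCoeff_fourier (T := (1 : ℝ)) h) 0
  rw [Pi.single_eq_of_ne hh.symm] at h1
  simpa [fourierCoeff, AddCircle.integral_haarAddCircle] using h1

lemma weyl_cont (w : ℕ → UnitAddCircle)
    (hw : ∀ h : ℤ, h ≠ 0 → Tendsto (fun N : ℕ =>
      ‖∑ i ∈ Finset.range N, (fourier h (w i) : ℂ)‖ / N) atTop (𝓝 0)) (f : C(UnitAddCircle, ℂ)) :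
    Tendsto (fun N : ℕ => (∑ i ∈ Finset.range N, f (w i)) / (N : ℂ)) atTop (𝓝 (∫ z, f z)) := by
  have hfint : ∀ f : C(UnitAddCircle, ℂ), Integrable (fun z => f z) (volume : Measure UnitAddCircle) := fun f =>
    f.continuous.integrable_of_hasCompactSupport (HasCompactSupport.of_compactSpace _)
  have hspan : ∀ g ∈ Submodule.span ℂ (Set.range <| @fourier (1 : ℝ)),
      Tendsto (fun N : ℕ => (∑ i ∈ Finset.range N, g (w i)) / (N : ℂ)) atTop (𝓝 (∫ z : UnitAddCircle, g z)) := by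
    intro g hg
    induction hg using Submodule.span_induction with
    | mem g hg =>
      obtain ⟨h, rfl⟩ := hg
      by_cases hh : h = 0
      · subst hh
        have : (∫ z : UnitAddCircle, (fourier 0 z : ℂ)) = 1 := by simp [measureReal_def]
        rw [this]
        refine tendsto_const_nhds.congr' ?_
        filter_upwards [eventually_gt_atTop 0] with N hN
        have : (N : ℂ) ≠ 0 := by exact_mod_cast hN.ne'
        simp [this]
      · rw [integral_fourier_volume h hh]
        rw [tendsto_zero_iff_norm_tendsto_zero]
        simpa using hw h hh
    | zero => simp
    | add f g _ _ hf hg =>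
      have := hf.add hg
      rw [← integral_add (hfint f) (hfint g)] at this
      refine this.congr fun N => ?_
      simp [Finset.sum_add_distrib, add_div]
    | smul c f _ hf =>
      have := hf.const_mul c
      rw [← integral_const_mul] at this
      refine this.congr fun N => ?_
      simp only [ContinuousMap.smul_apply, smul_eq_mul, ← Finset.mul_sum, mul_div_assoc]
  rw [Metric.tendsto_atTop]
  intro ε hε
  have hf : f ∈ closure (Submodule.span ℂ (Set.range <| @fourier (1 : ℝ)) : Set C(UnitAddCircle, ℂ)) := by
    have := span_fourier_closure_eq_top (T := (1 : ℝ))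
    rw [← Submodule.topologicalClosure_coe, this]
    trivial
  obtain ⟨g, hg, hfg⟩ := Metric.mem_closure_iff.1 hf (ε / 3) (by positivity)
  obtain ⟨M, hM⟩ := Metric.tendsto_atTop.1 (hspan g hg) (ε / 3) (by positivity)
  refine ⟨M, fun N hN => ?_⟩
  have h1 := hM N hN
  have hb : ∀ z, ‖f z - g z‖ ≤ dist f g := fun z => by
    rw [← dist_eq_norm]; exact ContinuousMap.dist_apply_le_dist z
  have h2 : dist ((∑ i ∈ Finset.range N, f (w i)) / (N : ℂ)) ((∑ i ∈ Finset.range N, g (w i)) / (N : ℂ)) ≤ dist f g := by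
    rw [dist_eq_norm, ← sub_div, ← Finset.sum_sub_distrib, norm_div, Complex.norm_natCast]
    apply div_le_of_le_mul₀ (by positivity) dist_nonneg
    calc _ ≤ ∑ i ∈ Finset.range N, ‖f (w i) - g (w i)‖ := norm_sum_le _ _
      _ ≤ ∑ i ∈ Finset.range N, dist f g := Finset.sum_le_sum fun i _ => hb _
      _ = _ := by simp [mul_comm]
  have h3 : dist (∫ z, g z) (∫ z, f z) ≤ dist f g := by
    rw [dist_comm, dist_eq_norm, ← integral_sub (hfint f) (hfint g)]
    have := norm_integral_le_of_norm_le_const (μ := (volume : Measure UnitAddCircle)) (ae_of_all _ hb)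
    simpa [measureReal_def] using this
  calc _ ≤ _ + _ + _ := dist_triangle4 _ ((∑ i ∈ Finset.range N, g (w i)) / (N : ℂ)) (∫ z, g z) _
    _ < ε := by linarith

instance isProb_volume_circle : IsProbabilityMeasure (volume : Measure UnitAddCircle) :=
  ⟨by simp⟩

lemma weyl_set (w : ℕ → UnitAddCircle)
    (hw : ∀ h : ℤ, h ≠ 0 → Tendsto (fun N : ℕ =>
      ‖∑ i ∈ Finset.range N, (fourier h (w i) : ℂ)‖ / N) atTop (𝓝 0)) (E : Set UnitAddCircle)
    (hE : MeasurableSet E) (hfr : volume (frontier E) = 0) :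
    Tendsto (fun N : ℕ => (((Finset.range N).filter fun n => w n ∈ E).card : ℝ) / N) atTop
      (𝓝 (volume.real E)) := by
  let ν : ℕ → Measure UnitAddCircle := fun N =>
    ((N + 1 : ℕ) : ENNReal)⁻¹ • ∑ i ∈ Finset.range (N + 1), Measure.dirac (w i)
  have hν : ∀ N, IsProbabilityMeasure (ν N) := by
    intro N
    refine ⟨?_⟩
    simp only [ν, Measure.smul_apply, Measure.finsetSum_apply, measure_univ, smul_eq_mul]
    simp only [Finset.sum_const, Finset.card_range, nsmul_eq_mul, mul_one]
    exact ENNReal.inv_mul_cancel (by simp) (ENNReal.natCast_ne_top _)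
  let P : ℕ → ProbabilityMeasure UnitAddCircle := fun N => ⟨ν N, hν N⟩
  let V : ProbabilityMeasure UnitAddCircle := ⟨volume, isProb_volume_circle⟩
  have hP : Tendsto P atTop (𝓝 V) := by
    rw [ProbabilityMeasure.tendsto_iff_forall_integral_rclike_tendsto ℂ]
    intro f
    have := (weyl_cont w hw f.toContinuousMap).comp (tendsto_add_atTop_nat 1)
    refine this.congr fun N => ?_
    have hd : ∀ i ∈ Finset.range (N + 1), Integrable (fun z => f z) (Measure.dirac (w i)) := fun i _ =>
      f.continuous.integrable_of_hasCompactSupport (HasCompactSupport.of_compactSpace _)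
    change _ = ∫ z, f z ∂(ν N)
    simp only [ν]
    rw [integral_smul_measure, integral_finsetSum_measure hd, ENNReal.toReal_inv,
      ENNReal.toReal_natCast]
    simp [integral_dirac, div_eq_inv_mul]
  have h1 := ProbabilityMeasure.tendsto_measure_of_null_frontier_of_tendsto' hP (E := E) hfr
  have h2 := (ENNReal.tendsto_toReal (measure_ne_top (volume : Measure UnitAddCircle) E)).comp h1
  rw [← tendsto_add_atTop_iff_nat 1]
  refine h2.congr fun N => ?_
  change ((ν N) E).toReal = _
  simp only [ν, Measure.smul_apply, Measure.finsetSum_apply, smul_eq_mul, Measure.dirac_apply' _ hE]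
  rw [ENNReal.toReal_mul, Finset.card_filter, ENNReal.toReal_sum]
  · rw [ENNReal.toReal_inv, ENNReal.toReal_natCast, div_eq_inv_mul]
    simp [Set.indicator_apply, apply_ite]
  · intro i _
    by_cases h : w i ∈ E <;> simp [h]

/-- words correspond to values of the floor -/
lemma word_floor (q : ℕ) (hq : 2 ≤ q) (d : ℕ → ℕ) (hd : ∀ i, d i < q) (m : ℕ) :
    ∃ a : ℕ, a < q ^ m ∧ ∀ y : ℝ, 0 ≤ y → y < 1 →
      ((∀ i < m, qdigit q y i = d i) ↔ ⌊y * (q : ℝ) ^ m⌋₊ = a) := by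
  induction m with
  | zero =>
    refine ⟨0, by simp, fun y hy0 hy1 => ?_⟩
    simp [Nat.floor_eq_zero, hy1]
  | succ m ih =>
    obtain ⟨a, ha, hiff⟩ := ih
    refine ⟨a * q + d m, ?_, fun y hy0 hy1 => ?_⟩
    · rw [pow_succ]
      have := hd m
      nlinarith
    · have hq0 : (q : ℝ) ≠ 0 := by positivity
      have h1 : ⌊y * (q : ℝ) ^ m⌋₊ = ⌊y * (q : ℝ) ^ (m + 1)⌋₊ / q := by
        rw [← Nat.floor_div_natCast]
        congr 1
        rw [pow_succ]
        field_simp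
      have h2 : qdigit q y m = ⌊y * (q : ℝ) ^ (m + 1)⌋₊ % q := rfl
      have h3 : (∀ i < m + 1, qdigit q y i = d i) ↔
          (∀ i < m, qdigit q y i = d i) ∧ qdigit q y m = d m := by
        constructor
        · exact fun h => ⟨fun i hi => h i (by omega), h m (by omega)⟩
        · rintro ⟨h, h'⟩ i hi
          rcases Nat.lt_succ_iff_lt_or_eq.1 hi with h4 | rfl
          · exact h i h4
          · exact h'
      rw [h3, hiff y hy0 hy1, h1, h2]
      generalize ⌊y * (q : ℝ) ^ (m + 1)⌋₊ = A
      have := hd m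
      constructor
      · rintro ⟨rfl, h⟩
        rw [← h]
        exact (Nat.div_add_mod' A q).symm
      · rintro rfl
        refine ⟨?_, ?_⟩
        · rw [Nat.add_comm, Nat.add_mul_div_right _ _ (by omega), Nat.div_eq_of_lt this, zero_add]
        · rw [Nat.add_comm, Nat.add_mul_mod_self_right, Nat.mod_eq_of_lt this]

lemma qdigit_shift (q : ℕ) (hq : 2 ≤ q) (x : ℝ) (hx : 0 ≤ x) (n i : ℕ) :
    qdigit q x (n + i) = qdigit q (Int.fract (x * (q : ℝ) ^ n)) i := by
  have hk : 0 ≤ ⌊x * (q : ℝ) ^ n⌋ := Int.floor_nonneg.2 (by positivity)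
  obtain ⟨k, hk'⟩ := Int.eq_ofNat_of_zero_le hk
  have hf : x * (q : ℝ) ^ n = Int.fract (x * (q : ℝ) ^ n) + k := by
    have := Int.fract_add_floor (x * (q : ℝ) ^ n)
    rw [hk'] at this
    simpa using this.symm
  have h0 := Int.fract_nonneg (x * (q : ℝ) ^ n)
  set y := Int.fract (x * (q : ℝ) ^ n)
  change ⌊x * (q : ℝ) ^ (n + i + 1)⌋₊ % q = ⌊y * (q : ℝ) ^ (i + 1)⌋₊ % q
  have e : x * (q : ℝ) ^ (n + i + 1) = y * (q : ℝ) ^ (i + 1) + ((k * q ^ i * q : ℕ) : ℝ) := by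
    rw [show n + i + 1 = n + (i + 1) by ring, pow_add, ← mul_assoc, hf]
    push_cast; ring
  rw [e, Nat.floor_add_natCast (by positivity), Nat.add_mul_mod_self_right]

/-- the arc -/
lemma arc_props (Q a : ℕ) (hQ : a < Q) :
    ∃ E : Set UnitAddCircle, MeasurableSet E ∧ volume (frontier E) = 0 ∧
      volume.real E = (Q : ℝ)⁻¹ ∧
      ∀ y : ℝ, 0 ≤ y → y < 1 → ((y : UnitAddCircle) ∈ E ↔ ⌊y * (Q : ℝ)⌋₊ = a) := by
  have hQ0 : (0 : ℝ) < Q := by exact_mod_cast (by omega : 0 < Q)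
  set s : ℝ := a / Q with hs
  set t : ℝ := (a + 1) / Q with ht
  have hst : s < t := by rw [hs, ht]; gcongr; linarith
  have hs0 : 0 ≤ s := by positivity
  have ht1 : t ≤ 1 := by
    rw [ht, div_le_one hQ0]; exact_mod_cast hQ
  set p : ℝ → UnitAddCircle := fun y => (y : UnitAddCircle) with hp
  have hpc : Continuous p := AddCircle.continuous_mk' 1
  have hsing : ∀ z : UnitAddCircle, volume ({z} : Set UnitAddCircle) = 0 := by
    intro z
    have := AddCircle.volume_closedBall (1 : ℝ) (x := z) 0
    simpa using this
  have hinj : ∀ y y' : ℝ, y ∈ Set.Ico (0 : ℝ) 1 → y' ∈ Set.Ico (0 : ℝ) 1 → p y = p y' → y = y' := by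
    intro y y' hy hy' h
    exact (AddCircle.coe_eq_coe_iff_of_mem_Ico (p := (1 : ℝ)) (a := 0) (by simpa using hy) (by simpa using hy')).1 h
  have hmem : ∀ y : ℝ, 0 ≤ y → y < 1 → (p y ∈ p '' Set.Ico s t ↔ ⌊y * (Q : ℝ)⌋₊ = a) := by
    intro y hy0 hy1
    have h1 : ⌊y * (Q : ℝ)⌋₊ = a ↔ y ∈ Set.Ico s t := by
      rw [Nat.floor_eq_iff (by positivity), Set.mem_Ico, hs, ht, div_le_iff₀ hQ0, lt_div_iff₀ hQ0]
    rw [h1]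
    constructor
    · rintro ⟨y', hy', h⟩
      rw [← hinj y' y ⟨hs0.trans hy'.1, hy'.2.trans_le ht1⟩ ⟨hy0, hy1⟩ h]
      exact hy'
    · exact fun h => ⟨y, h, rfl⟩
  have hopen : IsOpen (p '' Set.Ioo s t) := QuotientAddGroup.isOpenMap_coe _ isOpen_Ioo
  have hclosed : IsClosed (p '' Set.Icc s t) := (isCompact_Icc.image hpc).isClosed
  have hE : p '' Set.Ico s t = p '' Set.Ioo s t ∪ {p s} := by
    rw [← Set.Ioo_insert_left hst, Set.image_insert_eq, Set.union_singleton]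
  have hmeas : MeasurableSet (p '' Set.Ico s t) := by
    rw [hE]
    exact hopen.measurableSet.union (measurableSet_singleton _)
  refine ⟨p '' Set.Ico s t, hmeas, ?_, ?_, hmem⟩
  · have hsub : frontier (p '' Set.Ico s t) ⊆ {p s} ∪ {p t} := by
      intro z hz
      have h1 : z ∈ p '' Set.Icc s t :=
        closure_minimal (Set.image_mono Set.Ico_subset_Icc_self) hclosed hz.1
      obtain ⟨y, hy, rfl⟩ := h1
      have h2 : y ∉ Set.Ioo s t := fun h =>
        hz.2 (interior_maximal (Set.image_mono Set.Ioo_subset_Ico_self) hopen ⟨y, h, rfl⟩)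
      rcases eq_or_lt_of_le hy.1 with h | h
      · left; rw [← h]; rfl
      · rcases eq_or_lt_of_le hy.2 with h' | h'
        · right; rw [h']; rfl
        · exact absurd ⟨h, h'⟩ h2
    exact measure_mono_null hsub (measure_union_null (hsing _) (hsing _))
  · have h1 := AddCircle.add_projection_respects_measure (1 : ℝ) 0 hmeas
    have h2 : (QuotientAddGroup.mk ⁻¹' (p '' Set.Ico s t) ∩ Set.Ioc (0 : ℝ) (0 + 1) : Set ℝ)
        =ᵐ[volume] Set.Ico s t := by
      have h0 : ∀ᵐ y : ℝ ∂volume, y ≠ 0 := Measure.ae_ne volume 0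
      have h1 : ∀ᵐ y : ℝ ∂volume, y ≠ 1 := Measure.ae_ne volume 1
      filter_upwards [h0, h1] with y hy0 hy1
      apply propext
      constructor
      · rintro ⟨⟨y', hy', h⟩, hI⟩
        rw [zero_add] at hI
        change y ∈ Set.Ico s t
        rw [← hinj y' y ⟨hs0.trans hy'.1, hy'.2.trans_le ht1⟩ ⟨hI.1.le, lt_of_le_of_ne hI.2 hy1⟩ h]
        exact hy'
      · intro (h : y ∈ Set.Ico s t)
        exact ⟨⟨y, h, rfl⟩, lt_of_le_of_ne (hs0.trans h.1) (Ne.symm hy0), by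
          rw [zero_add]; exact h.2.le.trans ht1⟩
    rw [measureReal_def, h1, measure_congr h2, Real.volume_Ico, ENNReal.toReal_ofReal (by linarith), hs, ht]
    field_simp
    ring

lemma normal_of_weyl (q : ℕ) (hq : 2 ≤ q) (z : UnitAddCircle)
    (hz : ∀ h : ℤ, h ≠ 0 → Tendsto (fun N : ℕ =>
      ‖∑ i ∈ Finset.range N, (fourier (h * (q : ℤ) ^ i) z : ℂ)‖ / N) atTop (𝓝 0)) :
    IsNormal q ((AddCircle.equivIco 1 0 z : Set.Ico (0 : ℝ) (0 + 1)) : ℝ) := by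
  set x : ℝ := ((AddCircle.equivIco 1 0 z : Set.Ico (0 : ℝ) (0 + 1)) : ℝ) with hx
  have hx0 : 0 ≤ x := (AddCircle.equivIco 1 0 z).2.1
  have hxz : (x : UnitAddCircle) = z := AddCircle.coe_equivIco
  intro m hm d hd
  obtain ⟨a, ha, hword⟩ := word_floor q hq (fun i => if h : i < m then d ⟨i, h⟩ else 0)
    (fun i => by
      by_cases h : i < m
      · simpa [h] using hd _
      · simp only [h, dite_false]; omega) m
  obtain ⟨E, hEm, hEf, hEv, hE⟩ := arc_props (q ^ m) a ha
  let w : ℕ → UnitAddCircle := fun n => ((q : ℤ) ^ n) • z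
  have hw : ∀ h : ℤ, h ≠ 0 → Tendsto (fun N : ℕ =>
      ‖∑ i ∈ Finset.range N, (fourier h (w i) : ℂ)‖ / N) atTop (𝓝 0) := by
    intro h hh
    refine (hz h hh).congr fun N => ?_
    simp only [w, fourier_apply, smul_smul]
  have hlim := weyl_set w hw E hEm hEf
  rw [hEv] at hlim
  push_cast at hlim
  have hwf : ∀ n, w n = ((Int.fract (x * (q : ℝ) ^ n) : ℝ) : UnitAddCircle) := by
    intro n
    have h1 : w n = ((x * (q : ℝ) ^ n : ℝ) : UnitAddCircle) := by
      simp only [w]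
      rw [← hxz, ← AddCircle.coe_zsmul]
      congr 1
      rw [zsmul_eq_mul]
      push_cast
      ring
    rw [h1, ← sub_eq_zero, ← AddCircle.coe_sub, AddCircle.coe_eq_zero_iff]
    refine ⟨⌊x * (q : ℝ) ^ n⌋, ?_⟩
    rw [Int.self_sub_fract]
    simp
  have hiff : ∀ n, (w n ∈ E) ↔ ∀ i : Fin m, qdigit q x (n + (i : ℕ)) = d i := by
    intro n
    have h0 := Int.fract_nonneg (x * (q : ℝ) ^ n)
    have h1 := Int.fract_lt_one (x * (q : ℝ) ^ n)
    rw [hwf, hE _ h0 h1]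
    push_cast
    rw [← hword _ h0 h1]
    constructor
    · intro h i
      rw [qdigit_shift q hq x hx0, h i i.2]
      simp
    · intro h i hi
      rw [← qdigit_shift q hq x hx0]
      simpa [hi] using h ⟨i, hi⟩
  refine hlim.congr fun N => ?_
  congr 2
  apply congrArg
  ext n
  simp only [Finset.mem_filter, hiff]

/-- If the Fourier coefficients of a Borel probability measure `μ` on the circle `ℝ/ℤ` satisfy
`|μ̂(k)| ≤ φ(|k|)` for a non-increasing `φ : ℕ → [0, ∞)` with `∑_{n ≥ 2} φ(n)/(n log n) < ∞`,
then for every base `q ≥ 2`, `μ`-almost every point of the circle (identified with its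
representative in `[0,1)`) is normal to base `q`. -/
theorem normal_ae_of_fourier_decay (μ : Measure UnitAddCircle) [IsProbabilityMeasure μ]
    (φ : ℕ → ℝ) (hφ0 : ∀ n, 0 ≤ φ n) (hφmono : Antitone φ)
    (hφsum : Summable fun n : ℕ => φ (n + 2) / (((n : ℝ) + 2) * Real.log ((n : ℝ) + 2)))
    (hdecay : ∀ k : ℤ, k ≠ 0 → ‖∫ z, fourier (-k) z ∂μ‖ ≤ φ k.natAbs) :
    ∀ q : ℕ, 2 ≤ q →
      ∀ᵐ z ∂μ, IsNormal q ((AddCircle.equivIco 1 0 z : Set.Ico (0 : ℝ) (0 + 1)) : ℝ) := by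
  intro q hq
  have h : ∀ᵐ z ∂μ, ∀ h : ℤ, h ≠ 0 → Tendsto (fun N : ℕ =>
      ‖∑ i ∈ Finset.range N, (fourier (h * (q : ℤ) ^ i) z : ℂ)‖ / N) atTop (𝓝 0) := by
    rw [ae_all_iff]
    intro h
    by_cases hh : h = 0
    · exact ae_of_all _ fun z h' => absurd hh h'
    · filter_upwards [ae_weyl μ φ hφ0 hφmono hφsum hdecay q hq h hh] with z hz _
      exact hz
  filter_upwards [h] with z hz
  exact normal_of_weyl q hq z hz
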